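/- Fix a finite field 𝔽_q of odd characteristic p, a nontrivial additive character ψ_q : 𝔽_q → ℂ, and γ ∈ 𝔽_qˣ. Set c_p := 2(p − 1). Then for every integer a ≥ 1 and every B ∈ P_q(a), the angle θ_γ(B) satisfies (q^a)^(−c_p) ≤ θ_γ(B) ≤ π − (q^a)^(−c_p). -/

import Mathlib

/-!
Let `F` be a finite field with `Q` elements in odd characteristic `p`, let `ψ` be a nontrivial
additive character and `a ≠ 0`, and let `S = ∑_{x ≠ 0} ψ (x + a / x)`, which is real. The angle `θ`
has `sin² θ = 1 - S² / (4 Q)`, and `θ` and `π - θ` are both at least `sin θ`. So the theorem asks for a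
lower bound for `4 Q - S²`; it comes from an arithmetic argument, once Weil's bound `S² ≤ 4 Q`
is known.

*Weil's bound* (`klBound_two`). Let `Q = p ^ (2 (m + 1))`. Stepanov's method (`stepanov`) produces a
nonzero polynomial of degree at most `Q / p + 4 √Q` vanishing at every `x ≠ 0` for which
`x + a / x` has a given trace in the prime field. So no fibre of the trace is much larger than the
average, and since there are `p` fibres this gives `|S| ≤ (4 p + 1) √Q` (`norm_klSum_le_of_even`).
The constant is improved through quadratic extensions: if `S'` is the sum over the quadratic
extension, then `S² + S' = 2 Q` (`klSum_quadratic`), as is seen by parametrising pairs `(x, y)` by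
`x y = u² - v²` and elements `z` of the extension by their norm `u² - d v²`. A bound
`|S'| ≤ (2 + e) Q` valid over all extensions therefore gives `|S| ≤ (2 + e / 2) √Q`, and iterating
this one reaches `|S| ≤ 2 √Q` in the limit.

*The gap* (`klSum_gap`). The number `4 Q - S²` is an algebraic integer in the `p`-th cyclotomic
field `ℚ(ζ)`. Modulo the prime `ζ - 1` it is congruent to `-(Q - 1)² ≡ -1`, so it is not zero and its norm
is at least `1` in absolute value. Its `p - 2` other conjugates are at most `Q⁴` each, whence
`4 Q - S² ≥ Q ^ (-4 (p - 2))`, and `sin θ ≥ Q ^ (-2 (p - 1))`. Finally, `Q = q ^ deg B ≤ q ^ a`.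
-/

/-- The (normalised) Kloosterman sum `Kl_F(ψ; α) = −∑_{x ∈ Fˣ} ψ(x + α·x⁻¹)`. -/
noncomputable def Kl (R : Type) [CommRing R] (ψ : R → ℂ) (α : R) : ℂ :=
  -∑ᶠ x : Rˣ, ψ ((x : R) + α * ((x⁻¹ : Rˣ) : R))

/-- The angle `θ_F(ψ; α) = arccos(Re Kl_F(ψ; α) / (2·√|F|)) ∈ [0, π]` of the Kloosterman
sum `Kl_F(ψ; α)`. -/
noncomputable def klAngle (R : Type) [CommRing R] (ψ : R → ℂ) (α : R) : ℝ :=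
  Real.arccos ((Kl R ψ α).re / (2 * Real.sqrt (Nat.card R)))

/-- For a monic irreducible `B ≠ X` over `𝔽_q`, the angle `θ_γ(B)` of the Kloosterman sum
`Kln_γ(B) = Kl_{F_B}(ψ_q ∘ Tr_{F_B/𝔽_q}; γ·β_B²)`, where `F_B = 𝔽_q[X]/(B)` and `β_B` is
the residue class of `X`. -/
noncomputable def thetaGamma (Fq : Type) [Field Fq] (ψq : AddChar Fq ℂ) (γ : Fqˣ)
    (B : Polynomial Fq) : ℝ :=
  klAngle (AdjoinRoot B) (fun x => ψq (Algebra.trace Fq (AdjoinRoot B) x))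
    (algebraMap Fq (AdjoinRoot B) (γ : Fq) * AdjoinRoot.root B ^ 2)

/-- `P_q(a)`: the set of monic irreducible polynomials `B ∈ 𝔽_q[X]` with `B ≠ X` and
`deg B ∣ a`. -/
def Pset (Fq : Type) [Field Fq] (a : ℕ) : Set (Polynomial Fq) :=
  {B | B.Monic ∧ Irreducible B ∧ B ≠ Polynomial.X ∧ B.natDegree ∣ a}

section KloostermanSums

open Polynomial Finset

/-! ### Stepanov's method -/

/-- Monic polynomials of pairwise distinct degrees are linearly independent. -/
theorem sum_C_mul_monic_ne_zero {F ι : Type*} [Field F] [Fintype ι] (M : ι → F[X])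
    (hM : ∀ i, (M i).Monic) (hinj : Function.Injective fun i => (M i).natDegree)
    (e : ι → F) (he : e ≠ 0) : ∑ i, C (e i) * M i ≠ 0 := by
  obtain ⟨i₀, hi₀⟩ := Function.ne_iff.mp he
  intro h0
  have hd := degree_sum_eq_of_disjoint (fun i => C (e i) * M i) univ (by
    rintro i ⟨-, hi⟩ j ⟨-, hj⟩ hij hdeg
    have hi' : e i ≠ 0 := by rintro h; simp [h] at hi
    have hj' : e j ≠ 0 := by rintro h; simp [h] at hj
    simp only [Function.comp_apply, degree_C_mul hi', degree_C_mul hj'] at hdeg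
    exact hij (hinj (natDegree_eq_of_degree_eq hdeg)))
  rw [h0, degree_zero, eq_comm, Finset.sup_eq_bot_iff] at hd
  have := hd i₀ (mem_univ _)
  rw [degree_eq_bot, mul_eq_zero, C_eq_zero] at this
  exact this.elim hi₀ (hM i₀).ne_zero

/-- With `r = p ^ m`, the polynomial `X ^ r · ∑_{l ≤ m} (X + a / X) ^ (p ^ l)`: the truncated trace
of `X + a / X` with its denominator cleared. It is written out in expanded form, in which the
truncated subtraction `p ^ m - p ^ l` is exact because `l ≤ m`. -/
noncomputable def stepW {F : Type*} [Field F] (p m : ℕ) (a : F) : F[X] :=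
  ∑ l ∈ range (m + 1), (X ^ (p ^ m + p ^ l) + C (a ^ p ^ l) * X ^ (p ^ m - p ^ l))

theorem stepW_monic {F : Type*} [Field F] {p : ℕ} (hp : p.Prime) (m : ℕ) (a : F) :
    (stepW p m a).Monic ∧ (stepW p m a).natDegree = 2 * p ^ m := by
  have hpos : 0 < p ^ m := pow_pos hp.pos m
  have key : stepW p m a = X ^ (2 * p ^ m) + (C (a ^ p ^ m) +
      ∑ l ∈ range m, (X ^ (p ^ m + p ^ l) + C (a ^ p ^ l) * X ^ (p ^ m - p ^ l))) := by
    rw [stepW, sum_range_succ, Nat.sub_self, pow_zero, mul_one, ← two_mul]; ring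
  have hdeg : (C (a ^ p ^ m) + ∑ l ∈ range m,
      (X ^ (p ^ m + p ^ l) + C (a ^ p ^ l) * X ^ (p ^ m - p ^ l))).degree
        < ((2 * p ^ m : ℕ) : WithBot ℕ) := by
    refine (degree_add_le _ _).trans_lt (max_lt ?_ ?_)
    · exact degree_C_le.trans_lt (by exact_mod_cast by omega)
    · rw [← mem_degreeLT]
      refine Submodule.sum_mem _ fun l hl => ?_
      have hlt : p ^ l < p ^ m := Nat.pow_lt_pow_right hp.one_lt (mem_range.mp hl)
      rw [mem_degreeLT]
      refine (degree_add_le _ _).trans_lt (max_lt ?_ ?_)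
      · rw [degree_X_pow]; exact_mod_cast by omega
      · exact (degree_C_mul_X_pow_le _ _).trans_lt (by exact_mod_cast by omega)
  rw [key]
  refine ⟨monic_X_pow_add hdeg, ?_⟩
  apply natDegree_eq_of_degree_eq_some
  rw [degree_add_eq_left_of_degree_lt (by rwa [degree_X_pow]), degree_X_pow]

theorem stepW_eval {F : Type*} [Field F] {p : ℕ} [CharP F p] (hp : p.Prime) (m : ℕ) (a x : F)
    (hx : x ≠ 0) :
    (stepW p m a).eval x = x ^ p ^ m * ∑ l ∈ range (m + 1), (x + a * x⁻¹) ^ p ^ l := by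
  have := Fact.mk hp
  rw [stepW, eval_finsetSum, mul_sum]
  refine sum_congr rfl fun l hl => ?_
  have hle : p ^ l ≤ p ^ m := Nat.pow_le_pow_right hp.pos (by simpa [Nat.lt_succ_iff] using hl)
  rw [add_pow_char_pow, mul_pow, inv_pow]
  simp only [eval_add, eval_mul, eval_pow, eval_X, eval_C]
  rw [pow_sub₀ _ hx hle, pow_add]; ring

/-- Stepanov's method. In a field with `p ^ (2 (m + 1))` elements, each fibre of
`x ↦ Tr (x + a / x)` (the trace to the prime field, written as a sum of Frobenius powers) has at most
`p r² + 4 p r` elements, where `r = p ^ m`.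

Let `q₀ = p r`, so that `q₀²` is the order of the field. On the fibre above `c`, the truncated trace
`T = ∑_{l ≤ m} (x + a / x) ^ (p ^ l)` satisfies `T ^ q₀ = c - T`. Hence the `q₀`-th power of a
combination `H` of the `M (i, j, k) = X ^ (i + q₀ j + r (p - 1 - k)) W ^ k`, whose degree is about
`p r²`, agrees on the fibre, up to a nonzero factor, with a combination of polynomials
`L (i, j, k)` of degree less than `p r² + 2 p r`. There are more triples `(i, j, k)` than that
degree, so the coefficients can be chosen, not all zero, to make the second combination vanish
identically. Since the `M (i, j, k)` have distinct degrees, `H` is then a nonzero polynomial of small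
degree vanishing on the whole fibre. -/
theorem stepanov {F : Type*} [Field F] [Fintype F] [DecidableEq F] {p : ℕ} [CharP F p]
    (hp : p.Prime) (hodd : p ≠ 2) (m : ℕ) (hcard : Fintype.card F = p ^ (2 * (m + 1))) (a c : F) :
    #{x : F | x ≠ 0 ∧ ∑ l ∈ range (2 * (m + 1)), (x + a * x⁻¹) ^ p ^ l = c}
      ≤ p * (p ^ m) ^ 2 + 4 * (p * p ^ m) := by
  have := Fact.mk hp
  have hp3 : 3 ≤ p := by have := hp.two_le; omega
  set r := p ^ m with hr
  have hrpos : 0 < r := pow_pos hp.pos m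
  have hq0 : p ^ (m + 1) = p * r := by rw [pow_succ']
  have hQ : ∀ x : F, (x ^ (p * r)) ^ (p * r) = x := fun x => by
    rw [← pow_mul, ← hq0, ← pow_add, ← two_mul, ← hcard, FiniteField.pow_card]
  set W := stepW p m a with hW
  obtain ⟨hWm, hWd⟩ := stepW_monic hp m a
  rw [← hW, ← hr] at hWd
  rw [← hW] at hWm
  let ι := Fin r × Fin (r + 3) × Fin p
  let M : ι → F[X] := fun i =>
    X ^ (i.1.1 + p * r * i.2.1.1 + r * (p - 1 - i.2.2.1)) * W ^ i.2.2.1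
  let L : ι → F[X] := fun i =>
    X ^ (p * r * i.1.1 + i.2.1.1 + r * (p - 1 - i.2.2.1)) * (C c * X ^ r - W) ^ i.2.2.1
  have hMm : ∀ i, (M i).Monic := fun i => (monic_X_pow _).mul (hWm.pow _)
  have hMd : ∀ i, (M i).natDegree = i.1.1 + r * (p * i.2.1.1 + (p - 1 + i.2.2.1)) := by
    rintro ⟨i, j, k⟩
    have hk : k.1 ≤ p - 1 := by have := k.2; omega
    simp only [M]
    rw [(monic_X_pow _).natDegree_mul (hWm.pow _), natDegree_X_pow, hWm.natDegree_pow, hWd]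
    obtain ⟨t, ht⟩ := Nat.exists_eq_add_of_le hk
    rw [ht, Nat.add_sub_cancel_left]; ring
  -- `i` is the remainder of the degree mod `r`, then `k` that of the shifted quotient mod `p`
  have hinj : Function.Injective fun i => (M i).natDegree := by
    rintro ⟨i, j, k⟩ ⟨i', j', k'⟩ h
    simp only [hMd] at h
    have h1 : i.1 = i'.1 := by
      have := congrArg (· % r) h
      simpa [Nat.add_mul_mod_self_left, Nat.mod_eq_of_lt i.2, Nat.mod_eq_of_lt i'.2] using this
    rw [h1] at h
    have h2 := Nat.eq_of_mul_eq_mul_left hrpos (Nat.add_left_cancel h)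
    have h3 : p * j.1 + k.1 = p * j'.1 + k'.1 := by omega
    have h4 : k.1 = k'.1 := by
      have := congrArg (· % p) h3
      simpa [Nat.mul_add_mod, Nat.mod_eq_of_lt k.2, Nat.mod_eq_of_lt k'.2] using this
    rw [h4] at h3
    have h5 := Nat.eq_of_mul_eq_mul_left hp.pos (Nat.add_right_cancel h3)
    ext <;> assumption
  -- the linear system `∑ d i • L i = 0`: `D` equations in `r (r + 3) p` unknowns
  let D := p * r * r + 2 * p * r
  have hLd : ∀ i, L i ∈ degreeLT F D := by
    rintro ⟨i, j, k⟩
    have hk : k.1 ≤ p - 1 := by have := k.2; omega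
    have hV : (C c * X ^ r - W).natDegree ≤ 2 * r := by
      refine (natDegree_sub_le _ _).trans (max_le ?_ hWd.le)
      exact (natDegree_C_mul_X_pow_le _ _).trans (by omega)
    have h1 : (L (i, j, k)).natDegree ≤
        p * r * i.1 + j.1 + r * (p - 1 - k.1) + k.1 * (2 * r) := by
      refine natDegree_mul_le.trans (add_le_add ?_ ?_)
      · exact (natDegree_X_pow _).le
      · exact natDegree_pow_le.trans (Nat.mul_le_mul_left _ hV)
    rw [mem_degreeLT]
    refine degree_le_natDegree.trans_lt ?_
    norm_cast
    refine h1.trans_lt ?_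
    obtain ⟨t, ht⟩ := Nat.exists_eq_add_of_le hk
    have hj := j.2
    simp only [D]
    rw [ht, Nat.add_sub_cancel_left]
    have hkt : k.1 + t + 1 = p := by omega
    have b1 : p * r * (i.1 + 1) ≤ p * r * r := Nat.mul_le_mul_left _ i.2
    have b2 : r * (k.1 + t + 1) = r * p := by rw [hkt]
    have b3 : r * (k.1 + 1) ≤ r * p := Nat.mul_le_mul_left _ k.2
    have b4 : 3 * r ≤ p * r := Nat.mul_le_mul_right _ hp3
    nlinarith
  let Φ : (ι → F) →ₗ[F] degreeLT F D :=
    ∑ i, (LinearMap.proj i : (ι → F) →ₗ[F] F).smulRight (⟨L i, hLd i⟩ : degreeLT F D)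
  have hΦ : ∀ d, ((Φ d : degreeLT F D) : F[X]) = ∑ i, C (d i) * L i := by
    intro d
    simp [Φ, LinearMap.sum_apply, smul_eq_C_mul]
  obtain ⟨d, hdker, hd0⟩ : ∃ d, Φ d = 0 ∧ d ≠ 0 := by
    have := LinearMap.ker_ne_bot_of_finrank_lt (f := Φ) (by
      have := Module.Finite.equiv (degreeLTEquiv F D).symm
      rw [(degreeLTEquiv F D).finrank_eq, Module.finrank_fin_fun,
        Module.finrank_fintype_fun_eq_card]
      simp only [ι, Fintype.card_prod, Fintype.card_fin, D]
      nlinarith [Nat.mul_pos hp.pos hrpos])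
    obtain ⟨d, h1, h2⟩ := Submodule.exists_mem_ne_zero_of_ne_bot this
    exact ⟨d, h1, h2⟩
  have hsum0 : ∑ i, C (d i) * L i = 0 := by rw [← hΦ, hdker]; rfl
  -- the map `t ↦ t ^ q₀` is an involution of the field, so `e i ^ q₀ = d i`
  let e : ι → F := fun i => d i ^ (p * r)
  have he0 : e ≠ 0 := by
    obtain ⟨i, hi⟩ := Function.ne_iff.mp hd0
    exact Function.ne_iff.mpr ⟨i, pow_ne_zero _ hi⟩
  let H := ∑ i, C (e i) * M i
  have hH : H ≠ 0 := sum_C_mul_monic_ne_zero M hMm hinj e he0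
  have hHd : H.natDegree ≤ p * r ^ 2 + 4 * (p * r) := by
    refine natDegree_sum_le_of_forall_le _ _ fun i _ => ?_
    refine (natDegree_C_mul_le _ _).trans ?_
    rw [hMd]
    have h1 := i.1.2
    have h2 : i.2.1.1 ≤ r + 2 := by have := i.2.1.2; omega
    have h3 : i.2.2.1 ≤ p - 1 := by have := i.2.2.2; omega
    calc _ ≤ r + r * (p * (r + 2) + (p - 1 + (p - 1))) := by gcongr
      _ ≤ _ := by
        obtain ⟨P, rfl⟩ : ∃ P, p = P + 3 := ⟨p - 3, by omega⟩
        simp only [show P + 3 - 1 = P + 2 by omega]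
        nlinarith
  refine le_trans (card_le_degree_of_subset_roots (p := H) ?_) hHd
  intro x hx
  rw [mem_val, mem_filter_univ] at hx
  obtain ⟨hx0, hxc⟩ := hx
  rw [mem_roots hH, IsRoot.def]
  set T := ∑ l ∈ range (m + 1), (x + a * x⁻¹) ^ p ^ l with hT
  -- the trace splits as `T + T ^ q₀`
  have hTc : T ^ (p * r) = c - T := by
    rw [eq_sub_iff_add_eq, ← hxc, two_mul, sum_range_add, add_comm, ← hT]
    congr 1
    rw [hT, ← hq0, sum_pow_char_pow]
    refine sum_congr rfl fun l _ => ?_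
    rw [← pow_mul, ← pow_add, Nat.add_comm l]
  have hWx : W.eval x = x ^ r * T := stepW_eval hp m a x hx0
  have hML : ∀ i, (M i).eval x ^ (p * r) * x ^ (r * (p - 1)) =
      (L i).eval x * (x ^ (r * (p - 1))) ^ (p * r) := by
    rintro ⟨i, j, k⟩
    have hk : k.1 ≤ p - 1 := by have := k.2; omega
    obtain ⟨t, ht⟩ := Nat.exists_eq_add_of_le hk
    simp only [M, L, eval_mul, eval_pow, eval_X, eval_sub, eval_C, hWx]
    rw [ht, Nat.add_sub_cancel_left, show c * x ^ r - x ^ r * T = x ^ r * T ^ (p * r) by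
      rw [hTc]; ring]
    have h1 : x ^ j.1 = (x ^ (p * r * j.1)) ^ (p * r) := by
      conv_lhs => rw [← hQ (x ^ j.1)]
      rw [← pow_mul, ← pow_mul, ← pow_mul]; ring_nf
    rw [pow_add x (p * r * i.1 + j.1), pow_add x (p * r * i.1), h1]
    ring
  have : eval x H ^ (p * r) * x ^ (r * (p - 1)) = 0 := by
    simp only [H, eval_finsetSum, eval_mul, eval_C]
    rw [← hq0, sum_pow_char_pow, sum_mul, hq0]
    have h2 := congrArg (eval x) hsum0
    simp only [eval_finsetSum, eval_mul, eval_C, eval_zero] at h2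
    rw [← zero_mul ((x ^ (r * (p - 1))) ^ (p * r)), ← h2, sum_mul]
    refine sum_congr rfl fun i _ => ?_
    rw [mul_pow, mul_assoc, hML, hQ, mul_assoc]
  rcases mul_eq_zero.mp this with h | h
  · exact pow_eq_zero_iff (by positivity) |>.mp h
  · exact absurd h (pow_ne_zero _ hx0)

/-! ### Kloosterman sums over fields of even degree -/

open Classical in
/-- The Kloosterman sum `∑_{x ≠ 0} ψ (x + a / x)`, without the sign in `Kl`. -/
noncomputable def klSum {F : Type*} [Field F] [Fintype F] (ψ : AddChar F ℂ) (a : F) : ℂ :=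
  ∑ x : F with x ≠ 0, ψ (x + a * x⁻¹)

/-- Every nontrivial additive character is `x ↦ exp (2 π i Tr (b x) / p)` for some `b ≠ 0`. -/
theorem exists_trace_char {F : Type*} [Field F] [Fintype F] {p : ℕ} [Fact p.Prime]
    [Algebra (ZMod p) F] (ψ : AddChar F ℂ) (hψ : ψ ≠ 1) :
    ∃ b : F, b ≠ 0 ∧ ∀ x, ψ x = ZMod.stdAddChar (Algebra.trace (ZMod p) F (b * x)) := by
  classical
  let ψ₁ : AddChar F ℂ :=
    (ZMod.stdAddChar (N := p)).compAddMonoidHom (Algebra.trace (ZMod p) F).toAddMonoidHom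
  have h1 : ψ₁ ≠ 1 := by
    obtain ⟨x, hx⟩ := Algebra.trace_surjective (ZMod p) F 1
    refine AddChar.ne_one_iff.mpr ⟨x, fun h => ?_⟩
    have h2 : (ZMod.stdAddChar (N := p)) (Algebra.trace (ZMod p) F x) = 1 := h
    rw [(ZMod.isPrimitive_stdAddChar p).zmod_char_eq_one_iff, hx] at h2
    exact one_ne_zero h2
  have hbij : Function.Bijective (AddChar.mulShift ψ₁) := by
    rw [Fintype.bijective_iff_injective_and_card, AddChar.card_eq]
    exact ⟨AddChar.to_mulShift_inj_of_isPrimitive (AddChar.IsPrimitive.of_ne_one h1), rfl⟩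
  obtain ⟨b, hb⟩ := hbij.2 ψ
  refine ⟨b, ?_, fun x => ?_⟩
  · rintro rfl
    exact hψ (by rw [← hb, AddChar.mulShift_zero])
  · rw [← hb]; rfl

/-- Since the fibres of the trace all have at most `U = Q / p + 4 √Q` elements and there are only `p`
of them, they are almost equal in size, and the sum over the fibres cancels up to `O(√Q)`. -/
theorem norm_klSum_le_of_even {F : Type*} [Field F] [Fintype F] {p : ℕ} [CharP F p]
    (hp : p.Prime) (hodd : p ≠ 2) (m : ℕ) (hcard : Fintype.card F = p ^ (2 * (m + 1)))
    (ψ : AddChar F ℂ) (hψ : ψ ≠ 1) (a : F) : ‖klSum ψ a‖ ≤ (4 * p + 1) * (p : ℝ) ^ (m + 1) := by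
  classical
  have := Fact.mk hp
  let := ZMod.algebra F p
  obtain ⟨b, hb, hψb⟩ := exists_trace_char (p := p) ψ hψ
  set e := ZMod.stdAddChar (N := p)
  let g : F → ZMod p := fun x => Algebra.trace (ZMod p) F (x + a * b ^ 2 * x⁻¹)
  let N : ZMod p → ℕ := fun c => #{x ∈ ({x : F | x ≠ 0} : Finset F) | g x = c}
  -- the substitution `x ↦ b x` moves `b` from the character into the parameter
  have h1 : klSum ψ a = ∑ x : F with x ≠ 0, e (g x) := by
    rw [klSum]
    refine sum_bij' (fun x _ => b * x) (fun x _ => b⁻¹ * x) ?_ ?_ ?_ ?_ ?_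
    · simp +contextual [hb]
    · simp +contextual [hb]
    · simp [hb]
    · simp [hb]
    · intro x hx
      have hx : x ≠ 0 := by simpa using hx
      rw [hψb]
      simp only [g]
      congr 2
      field_simp
  have h2 : klSum ψ a = ∑ c, (N c : ℂ) * e c := by
    rw [h1, ← sum_fiberwise _ g]
    refine sum_congr rfl fun c _ => ?_
    rw [sum_congr rfl (g := fun _ => e c) (by simp +contextual), sum_const, nsmul_eq_mul]
  set U : ℕ := p * (p ^ m) ^ 2 + 4 * (p * p ^ m) with hU
  have hN : ∀ c, N c ≤ U := by
    intro c
    refine le_trans (card_le_card ?_)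
      (stepanov hp hodd m hcard (a * b ^ 2) (algebraMap (ZMod p) F c))
    intro x hx
    simp only [mem_filter, mem_univ, true_and] at hx ⊢
    refine ⟨hx.1, ?_⟩
    rw [← hx.2, FiniteField.algebraMap_trace_eq_sum_pow, Nat.card_zmod]
    congr 2
    have := Module.card_eq_pow_finrank (K := ZMod p) (V := F)
    rw [hcard, ZMod.card] at this
    exact Nat.pow_right_injective hp.two_le this
  have hNs : ∑ c, N c + 1 = p ^ (2 * (m + 1)) := by
    have := card_eq_sum_card_fiberwise (f := g) (s := ({x : F | x ≠ 0} : Finset F)) (t := univ)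
      (by simp)
    rw [← this, filter_ne', ← hcard, card_erase_add_one (mem_univ _), card_univ]
  -- subtracting the constant `U` from all fibres changes nothing, and makes all terms one-signed
  have h3 : klSum ψ a = - ∑ c, ((U : ℂ) - N c) * e c := by
    have h0 : ∑ c, e c = 0 := AddChar.sum_eq_zero_of_ne_one (by
      intro h
      have := (ZMod.isPrimitive_stdAddChar p).zmod_char_eq_one_iff p 1
      simp [e] at h
      simp [h] at this)
    simp only [sub_mul, sum_sub_distrib, ← mul_sum, h0]
    rw [h2]; ring
  rw [h3, norm_neg]
  refine (norm_sum_le _ _).trans ?_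
  have h4 : ∀ c, ‖((U : ℂ) - N c) * e c‖ = (U : ℝ) - N c := by
    intro c
    rw [norm_mul, AddChar.norm_apply, mul_one, ← Nat.cast_sub (hN c), Complex.norm_natCast,
      Nat.cast_sub (hN c)]
  simp only [h4, sum_sub_distrib, sum_const, card_univ, ZMod.card, nsmul_eq_mul]
  have h5 : (∑ c, (N c : ℝ)) + 1 = (p : ℝ) ^ (2 * (m + 1)) := by exact_mod_cast hNs
  have h6 : (p : ℝ) * U = p ^ (2 * (m + 1)) + 4 * p * (p : ℝ) ^ (m + 1) := by
    rw [hU]; push_cast; ring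
  have h7 : (1 : ℝ) ≤ (p : ℝ) ^ (m + 1) := one_le_pow₀ (by exact_mod_cast hp.one_le)
  linarith

/-! ### Quadratic extensions -/

/-- Every element of `F` is hit exactly twice by `v²` and `d v²` together, `d` being a nonsquare. -/
theorem sum_sq_add_sum_nonsq {F : Type*} [Field F] [Fintype F] [DecidableEq F]
    (hF : ringChar F ≠ 2) {d : F} (hd : ¬ IsSquare d) (f : F → ℂ) :
    ∑ v, f (v ^ 2) + ∑ v, f (d * v ^ 2) = 2 * ∑ w, f w := by
  have hd0 : d ≠ 0 := by rintro rfl; exact hd (IsSquare.zero)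
  have key : ∀ f : F → ℂ, ∑ v, f (v ^ 2) = ∑ w, ((quadraticChar F w : ℂ) + 1) * f w := by
    intro f
    rw [← sum_fiberwise _ (fun v : F => v ^ 2)]
    refine sum_congr rfl fun w _ => ?_
    rw [sum_congr rfl (g := fun _ => f w) (by simp +contextual), sum_const, nsmul_eq_mul]
    congr 1
    have := quadraticChar_card_sqrts hF w
    rw [Set.toFinset_ofPred] at this
    exact_mod_cast this
  have h2 : ∑ v, f (d * v ^ 2) = ∑ w, (-(quadraticChar F w : ℂ) + 1) * f w := by
    rw [key fun w => f (d * w)]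
    refine Fintype.sum_equiv (Equiv.mulLeft₀ d hd0) _ _ fun w => ?_
    have : quadraticChar F (d * w) = - quadraticChar F w := by
      rw [map_mul, quadraticChar_neg_one_iff_not_isSquare.mpr hd, neg_one_mul]
    simp [this]
  rw [key, h2, ← sum_add_distrib, mul_sum]
  exact sum_congr rfl fun w _ => by ring

/-- The relation between the Kloosterman sums over `F` and over its quadratic extension `K`, with
`χ = ψ ∘ Tr_{K/F}` and the same parameter `a`. Writing `x y = u² - v²` in the square of the sum over
`F`, and `N(z) = u² - d v²` in the sum over `K = F(√d)`, both become sums over `(u, v)` of the same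
function of `u` and of `t = x y`, respectively `t = N(z)`. As `v` varies, `v²` and `d v²` together
cover every element of `F` exactly twice, and the remaining complete sum is elementary. -/
theorem klSum_quadratic {F : Type} [Field F] [Fintype F] (hF : ringChar F ≠ 2)
    (ψ : AddChar F ℂ) (hψ : ψ ≠ 1) (a : F) (ha : a ≠ 0) :
    ∃ (K : Type) (_ : Field K) (_ : Fintype K) (_ : Algebra F K) (χ : AddChar K ℂ) (b : K),
      Fintype.card K = Fintype.card F ^ 2 ∧ χ ≠ 1 ∧ b ≠ 0 ∧
      klSum ψ a ^ 2 + klSum χ b = 2 * Fintype.card F := by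
  classical
  have h2 : (2 : F) ≠ 0 := Ring.two_ne_zero hF
  obtain ⟨d, hd⟩ := FiniteField.exists_nonsquare hF
  have : Fact (∀ r, r ^ 2 ≠ d + 0 * r) := ⟨fun r h => hd ⟨r, by rw [← sq, h]; ring⟩⟩
  let : Fintype (QuadraticAlgebra F d 0) := Fintype.ofEquiv _ (QuadraticAlgebra.equivProd d 0).symm
  -- `2 * z.re` is the trace of `z`
  let χ : AddChar (QuadraticAlgebra F d 0) ℂ := ψ.compAddMonoidHom
    { toFun := fun z => 2 * z.re, map_zero' := by simp, map_add' := by simp [mul_add] }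
  have hχ : ∀ z, χ z = ψ (2 * z.re) := fun z => rfl
  refine ⟨QuadraticAlgebra F d 0, inferInstance, inferInstance, inferInstance, χ,
    algebraMap F (QuadraticAlgebra F d 0) a, ?_, ?_, ?_, ?_⟩
  · rw [Fintype.card_congr (QuadraticAlgebra.equivProd d 0), Fintype.card_prod, sq]
  · obtain ⟨x, hx⟩ := AddChar.ne_one_iff.mp hψ
    refine AddChar.ne_one_iff.mpr ⟨algebraMap F (QuadraticAlgebra F d 0) (x / 2), ?_⟩
    rw [hχ, QuadraticAlgebra.algebraMap_re, mul_div_cancel₀ _ h2]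
    exact hx
  · simpa using ha
  -- `x + a / x + y + a / y = (x + y) (1 + a / (x y))`, with `x + y = 2 u` and `x y = t`
  let G : F → F → ℂ := fun u t => if t = 0 then 0 else ψ (2 * u + 2 * u * a * t⁻¹)
  have hS : klSum ψ a ^ 2 = ∑ u, ∑ v, G u (u ^ 2 - v ^ 2) := by
    rw [sq, klSum, sum_filter, sum_mul_sum, ← Fintype.sum_prod_type', ← Fintype.sum_prod_type']
    refine Fintype.sum_bijective (fun z : F × F => ((z.1 + z.2) / 2, (z.1 - z.2) / 2)) ?_ _ _ ?_
    · refine Function.bijective_iff_has_inverse.mpr ⟨fun z => (z.1 + z.2, z.1 - z.2), ?_, ?_⟩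
      · rintro ⟨x, y⟩; ext <;> simp <;> field_simp <;> ring
      · rintro ⟨x, y⟩; ext <;> simp <;> field_simp <;> ring
    · rintro ⟨x, y⟩
      have hxy : ((x + y) / 2) ^ 2 - ((x - y) / 2) ^ 2 = x * y := by field_simp; ring
      simp only [G, hxy]
      by_cases hx : x = 0
      · simp [hx]
      by_cases hy : y = 0
      · simp [hy]
      simp only [hx, hy, mul_eq_zero, or_self, not_false_eq_true, ne_eq, if_true, if_false]
      rw [← AddChar.map_add_eq_mul]
      congr 1
      field_simp
      ring
  have hK : klSum χ (algebraMap F (QuadraticAlgebra F d 0) a) =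
      ∑ u, ∑ v, G u (u ^ 2 - d * v ^ 2) := by
    rw [klSum, sum_filter, ← Fintype.sum_prod_type']
    refine Fintype.sum_equiv (QuadraticAlgebra.equivProd d 0) _ _ fun z => ?_
    have hn : z.re ^ 2 - d * z.im ^ 2 = z.norm := by rw [QuadraticAlgebra.norm_def]; ring
    change _ = G z.re (z.re ^ 2 - d * z.im ^ 2)
    simp only [G, hn, QuadraticAlgebra.norm_eq_zero_iff_eq_zero]
    by_cases hz : z = 0
    · simp [hz]
    simp only [hz, ne_eq, not_false_eq_true, if_true, if_false]
    rw [hχ]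
    congr 1
    simp [QuadraticAlgebra.inv_def]
    ring
  rw [hS, hK, ← sum_add_distrib]
  have h3 : ∀ u, ∑ v, G u (u ^ 2 - v ^ 2) + ∑ v, G u (u ^ 2 - d * v ^ 2) = 2 * ∑ t, G u t := by
    intro u
    rw [sum_sq_add_sum_nonsq hF hd (fun w => G u (u ^ 2 - w))]
    congr 1
    exact Fintype.sum_equiv (Equiv.subLeft (u ^ 2)) _ _ fun w => rfl
  rw [sum_congr rfl fun u _ => h3 u, ← mul_sum, sum_comm]
  congr 1
  -- `G u t` is a character in `u`, which is trivial only for `t = -a`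
  have h4 : ∀ t, ∑ u, G u t = if t = -a then (Fintype.card F : ℂ) else 0 := by
    intro t
    by_cases ht : t = 0
    · simp [G, ht, ha]
    have : ∀ u, G u t = ψ (u * (2 * (1 + a * t⁻¹))) := by
      intro u
      simp only [G, ht, if_false]
      congr 1; ring
    rw [sum_congr rfl fun u _ => this u, AddChar.sum_mulShift _ (AddChar.IsPrimitive.of_ne_one hψ)]
    have : 2 * (1 + a * t⁻¹) = 0 ↔ t = -a := by
      rw [mul_eq_zero, or_iff_right h2, eq_neg_iff_add_eq_zero, ← mul_eq_zero_iff_left ht]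
      field_simp
    simp only [this]
    split_ifs <;> simp
  simp [h4]

/-! ### Weil's bound -/

/-- All Kloosterman sums over all finite fields of characteristic `p`, for a nontrivial character and
a nonzero parameter, are at most `C √Q`, where `Q` is the order of the field. -/
def KlBound (p : ℕ) (C : ℝ) : Prop :=
  ∀ (F : Type) [Field F] [Fintype F] [CharP F p] (ψ : AddChar F ℂ) (a : F), ψ ≠ 1 → a ≠ 0 →
    ‖klSum ψ a‖ ≤ C * √(Fintype.card F)

/-- A bound `C √(Q²)` over fields of order `Q²` gives the bound `√(C + 2) √Q` over `F`. -/
theorem norm_sq_klSum_le {F : Type} [Field F] [Fintype F] {p : ℕ} [CharP F p] (hodd : p ≠ 2)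
    (ψ : AddChar F ℂ) (hψ : ψ ≠ 1) (a : F) (ha : a ≠ 0) (C : ℝ)
    (hC : ∀ (K : Type) [Field K] [Fintype K] [CharP K p] (χ : AddChar K ℂ) (b : K),
      Fintype.card K = Fintype.card F ^ 2 → χ ≠ 1 → b ≠ 0 → ‖klSum χ b‖ ≤ C * Fintype.card F) :
    ‖klSum ψ a‖ ^ 2 ≤ (C + 2) * Fintype.card F := by
  have hF : ringChar F ≠ 2 := by rwa [ringChar.eq F p]
  obtain ⟨K, _, _, _, χ, b, hcard, hχ, hb, h⟩ := klSum_quadratic hF ψ hψ a ha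
  have := charP_of_injective_algebraMap (algebraMap F K).injective p
  have hK := hC K χ b hcard hχ hb
  rw [← norm_pow, eq_sub_of_add_eq h]
  refine (norm_sub_le _ _).trans ?_
  have : ‖(2 * Fintype.card F : ℂ)‖ = 2 * Fintype.card F := by simp
  linarith

/-- A crude bound: the quadratic extension of any field has even degree, so the bound from Stepanov's
method applies to it. -/
theorem klBound_base {p : ℕ} (hp : p.Prime) (hodd : p ≠ 2) : KlBound p (2 + (4 * p + 1)) := by
  intro F _ _ _ ψ a hψ ha
  obtain ⟨n, -, hn⟩ := FiniteField.card F p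
  obtain ⟨m, hm⟩ := Nat.exists_eq_succ_of_ne_zero n.ne_zero
  have h := norm_sq_klSum_le hodd ψ hψ a ha (4 * p + 1) fun K _ _ _ χ b hcard hχ _ => by
    rw [hn]
    push_cast
    rw [hm]
    refine norm_klSum_le_of_even hp hodd m ?_ χ hχ b
    rw [hcard, hn, hm, ← pow_mul, mul_comm]
  refine abs_le_of_sq_le_sq' ?_ (by positivity) |>.2
  rw [mul_pow, Real.sq_sqrt (by positivity)]
  refine h.trans (mul_le_mul_of_nonneg_right ?_ (by positivity))
  nlinarith [(Nat.cast_nonneg p : (0 : ℝ) ≤ p)]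

theorem KlBound.step {p : ℕ} (hodd : p ≠ 2) {e : ℝ} (he : 0 ≤ e) (h : KlBound p (2 + e)) :
    KlBound p (2 + e / 2) := by
  intro F _ _ _ ψ a hψ ha
  have h := norm_sq_klSum_le hodd ψ hψ a ha (2 + e) fun K _ _ _ χ b hcard hχ hb => by
    have := h K χ b hχ hb
    rwa [hcard, Nat.cast_pow, Real.sqrt_sq (by positivity)] at this
  refine abs_le_of_sq_le_sq' ?_ (by positivity) |>.2
  rw [mul_pow, Real.sq_sqrt (by positivity)]
  refine h.trans (mul_le_mul_of_nonneg_right ?_ (by positivity))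
  nlinarith

/-- Weil's bound `|S| ≤ 2 √Q`: each passage to the quadratic extension halves the excess over `2`. -/
theorem klBound_two {p : ℕ} (hp : p.Prime) (hodd : p ≠ 2) : KlBound p 2 := by
  have hn : ∀ n : ℕ, KlBound p (2 + (4 * p + 1) / 2 ^ n) := by
    intro n
    induction n with
    | zero => simpa using klBound_base hp hodd
    | succ n ih =>
      have := ih.step hodd (by positivity)
      rwa [div_div, ← pow_succ] at this
  intro F _ _ _ ψ a hψ ha
  have hlim : Filter.Tendsto (fun n : ℕ => (2 + (4 * p + 1) / 2 ^ n : ℝ) * √(Fintype.card F))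
      Filter.atTop (nhds ((2 + 0) * √(Fintype.card F))) := by
    refine (tendsto_const_nhds.add ?_).mul_const _
    exact tendsto_const_nhds.div_atTop (tendsto_pow_atTop_atTop_of_one_lt one_lt_two)
  rw [add_zero] at hlim
  exact ge_of_tendsto' hlim fun n => hn n F ψ a hψ ha

/-! ### The arithmetic gap -/

theorem klSum_im {F : Type*} [Field F] [Fintype F] (ψ : AddChar F ℂ) (a : F) :
    (klSum ψ a).im = 0 := by
  classical
  rw [← Complex.conj_eq_iff_im, klSum, map_sum]
  refine sum_equiv (Equiv.neg F) (by simp) fun x _ => ?_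
  rw [← AddChar.map_neg_eq_conj]
  congr 1
  simp [inv_neg]; ring

/-- An effective strict version of Weil's bound. In the ring of integers of the `p`-th cyclotomic field,
`z = 4 Q - S²` is nonzero: modulo the prime `ζ - 1` above `p`, `4 Q ≡ 0` while
`S ≡ Q - 1 ≡ -1`. Its norm is therefore at least `1` in absolute value, while each of the `p - 2`
other conjugates is at most `Q⁴`. -/
theorem klSum_gap {F : Type*} [Field F] [Fintype F] {p : ℕ} [CharP F p] (hp : p.Prime)
    (hodd : p ≠ 2) (ψ : AddChar F ℂ) (a : F) :
    1 ≤ ‖4 * (Fintype.card F : ℂ) - klSum ψ a ^ 2‖ * ((Fintype.card F : ℝ) ^ 4) ^ (p - 2) := by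
  classical
  have := Fact.mk hp
  have : NeZero p := ⟨hp.ne_zero⟩
  set Q := Fintype.card F with hQ
  have hpQ : p ∣ Q := by
    obtain ⟨n, -, hn⟩ := FiniteField.card F p
    rw [hQ, hn]; exact dvd_pow_self _ n.ne_zero
  have hQ3 : 3 ≤ Q := by
    have := hp.two_le
    have := Nat.le_of_dvd Fintype.card_pos hpQ
    omega
  obtain ⟨K, _, _, _⟩ : ∃ (K : Type) (_ : Field K) (_ : NumberField K),
      IsCyclotomicExtension {p} ℚ K :=
    ⟨CyclotomicField p ℚ, inferInstance, inferInstance,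
      CyclotomicField.isCyclotomicExtension p ℚ⟩
  -- the character values are powers of one root of unity `σ₀ η`
  obtain ⟨σ₀⟩ : Nonempty (K →ₐ[ℚ] ℂ) := ⟨IsAlgClosed.lift⟩
  have hη : IsPrimitiveRoot (IsCyclotomicExtension.zeta p ℚ K) p :=
    IsCyclotomicExtension.zeta_spec p ℚ K
  set η := IsCyclotomicExtension.zeta p ℚ K
  have hζ : IsPrimitiveRoot (σ₀ η) p := hη.map_of_injective σ₀.injective
  have hψ : ∀ x, ∃ n : ℕ, ψ x = (σ₀ η) ^ n := by
    intro x
    have : ψ x ^ p = 1 := by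
      rw [← AddChar.map_nsmul_eq_pow, nsmul_eq_mul, CharP.cast_eq_zero, zero_mul,
        AddChar.map_zero_eq_one]
    obtain ⟨i, -, hi⟩ := hζ.eq_pow_of_pow_eq_one this
    exact ⟨i, hi.symm⟩
  choose n hn using hψ
  let η' := hη.toInteger
  let w : NumberField.RingOfIntegers K := ∑ x : F with x ≠ 0, η' ^ n (x + a * x⁻¹)
  let z : NumberField.RingOfIntegers K := 4 * (Q : NumberField.RingOfIntegers K) - w ^ 2
  have hσw : ∀ σ : K →ₐ[ℚ] ℂ, σ (w : K) = ∑ x : F with x ≠ 0, (σ η) ^ n (x + a * x⁻¹) := by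
    intro σ
    simp [w, η']
    rfl
  have hσz : ∀ σ : K →ₐ[ℚ] ℂ, σ (z : K) = 4 * (Q : ℂ) - σ (w : K) ^ 2 := by
    intro σ
    simp only [z, map_sub, map_mul, map_pow, map_natCast, map_ofNat]
  have hz₀ : σ₀ (z : K) = 4 * (Q : ℂ) - klSum ψ a ^ 2 := by
    rw [hσz, hσw, klSum]
    simp only [hn]
  have hcardne : #{x : F | x ≠ 0} + 1 = Q := by
    rw [filter_ne', card_erase_add_one (mem_univ _), card_univ]
  -- the trivial bound `|S| ≤ Q` holds for all conjugates, and `4 Q + Q² ≤ Q⁴`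
  have hbound : ∀ σ : K →ₐ[ℚ] ℂ, ‖σ (z : K)‖ ≤ (Q : ℝ) ^ 4 := by
    intro σ
    have hw : ‖σ (w : K)‖ ≤ Q := by
      rw [hσw]
      refine (norm_sum_le _ _).trans ?_
      have h1 : ‖σ η‖ = 1 := (hη.map_of_injective σ.injective).norm'_eq_one hp.ne_zero
      simp only [norm_pow, h1, one_pow, sum_const, nsmul_eq_mul, mul_one]
      exact_mod_cast (Nat.le_succ _).trans hcardne.le
    rw [hσz]
    refine (norm_sub_le _ _).trans ?_
    have h4 : ‖(4 * Q : ℂ)‖ = 4 * Q := by simp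
    rw [h4, norm_pow]
    have hQ3' : (3 : ℝ) ≤ Q := by exact_mod_cast hQ3
    have := pow_le_pow_left₀ (norm_nonneg _) hw 2
    nlinarith [pow_le_pow_left₀ (by norm_num) hQ3' 2, pow_le_pow_left₀ (by norm_num) hQ3' 3]
  have hz : z ≠ 0 := by
    intro hz
    have hprime : Prime (η' - 1) := hη.zeta_sub_one_prime'
    have hlp : (η' - 1) ∣ (Q : NumberField.RingOfIntegers K) := by
      refine dvd_trans ?_ (Nat.cast_dvd_cast hpQ)
      exact hη.toInteger_sub_one_dvd_prime'
    have h1 : (η' - 1) ∣ w := by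
      refine hprime.dvd_of_dvd_pow (n := 2) ?_
      rw [← sub_eq_zero.mp hz]
      exact hlp.mul_left 4
    have h2 : (η' - 1) ∣ w - (#{x : F | x ≠ 0} : NumberField.RingOfIntegers K) := by
      rw [card_eq_sum_ones, Nat.cast_sum, ← sum_sub_distrib]
      refine dvd_sum fun x _ => ?_
      simpa using sub_one_dvd_pow_sub_one η' _
    have h3 := (dvd_sub_right h1).mp h2
    have h4 : (η' - 1) ∣ 1 := by
      rw [← hcardne, Nat.cast_add, Nat.cast_one] at hlp
      exact (dvd_add_right h3).mp hlp
    exact hprime.not_isUnit (isUnit_of_dvd_one h4)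
  have hnorm : 1 ≤ ∏ σ : K →ₐ[ℚ] ℂ, ‖σ (z : K)‖ := by
    rw [← norm_prod, ← Algebra.norm_eq_prod_embeddings ℚ ℂ (z : K), ← Algebra.coe_norm_int]
    have : Algebra.norm ℤ z ≠ 0 := Algebra.norm_ne_zero_iff.mpr hz
    have h1 := Int.one_le_abs this
    simp only [eq_ratCast, Rat.cast_intCast, Complex.norm_intCast]
    exact_mod_cast h1
  rw [← mul_prod_erase _ _ (mem_univ σ₀), hz₀] at hnorm
  refine hnorm.trans (mul_le_mul_of_nonneg_left ?_ (norm_nonneg _))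
  refine (prod_le_prod (fun σ _ => norm_nonneg _) fun σ _ => hbound σ).trans (le_of_eq ?_)
  rw [prod_const, card_erase_of_mem (mem_univ _), card_univ, AlgHom.card,
    IsCyclotomicExtension.finrank K (Polynomial.cyclotomic.irreducible_rat hp.pos),
    Nat.totient_prime hp]
  rfl

/-! ### Bounds for the angle -/

/-- From `sin² (arccos t) = 1 - t² ≥ δ²` and `sin θ ≤ θ`. -/
theorem arccos_bounds {t δ : ℝ} (h : t ^ 2 + δ ^ 2 ≤ 1) :
    δ ≤ Real.arccos t ∧ Real.arccos t ≤ Real.pi - δ := by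
  have key : ∀ s : ℝ, s ^ 2 + δ ^ 2 ≤ 1 → δ ≤ Real.arccos s := fun s hs => by
    refine le_trans ?_ (Real.sin_le (Real.arccos_nonneg s))
    rw [Real.sin_arccos]
    exact Real.le_sqrt_of_sq_le (by linarith)
  have h2 := key (-t) (by rwa [neg_sq])
  rw [Real.arccos_neg] at h2
  exact ⟨key t h, by linarith⟩

/-- The distance of `S² / (4 Q)` from `1` given by `klSum_gap` turns into a bound on the angle. It is
stated with any `q ≥ Q` in the role of `q ^ a`. -/
theorem klSum_angle_bounds {F : Type} [Field F] [Fintype F] {p : ℕ} [CharP F p] (hp : p.Prime)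
    (hodd : p ≠ 2) (ψ : AddChar F ℂ) (hψ : ψ ≠ 1) (a : F) (ha : a ≠ 0) {q : ℝ}
    (hq : (Fintype.card F : ℝ) ≤ q) :
    q ^ (-(2 * ((p : ℝ) - 1))) ≤ Real.arccos ((-klSum ψ a).re / (2 * √(Nat.card F))) ∧
    Real.arccos ((-klSum ψ a).re / (2 * √(Nat.card F))) ≤
      Real.pi - q ^ (-(2 * ((p : ℝ) - 1))) := by
  have hweil := klBound_two hp hodd F ψ a hψ ha
  have hgap := klSum_gap hp hodd ψ a
  have hQ2 : 2 ≤ Fintype.card F := Fintype.one_lt_card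
  rw [Nat.card_eq_fintype_card]
  set Q := Fintype.card F
  have hQ : (2 : ℝ) ≤ Q := by exact_mod_cast hQ2
  have hQ0 : (0 : ℝ) < Q := by linarith
  have hS : klSum ψ a = ((klSum ψ a).re : ℂ) := by
    apply Complex.ext <;> simp [klSum_im]
  set s := (klSum ψ a).re
  rw [hS] at hweil hgap
  have hs : s ^ 2 ≤ 4 * Q := by
    rw [Complex.norm_real] at hweil
    have := pow_le_pow_left₀ (norm_nonneg _) hweil 2
    rw [mul_pow, Real.sq_sqrt hQ0.le, Real.norm_eq_abs, sq_abs] at this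
    linarith
  have hgap' : 1 ≤ (4 * Q - s ^ 2) * ((Q : ℝ) ^ 4) ^ (p - 2) := by
    convert hgap using 2
    rw [show (4 * (Q : ℂ) - (s : ℂ) ^ 2) = ((4 * Q - s ^ 2 : ℝ) : ℂ) by push_cast; ring,
      Complex.norm_real, Real.norm_of_nonneg (by linarith)]
  have hδ : (0 : ℝ) ≤ q ^ (-(2 * ((p : ℝ) - 1))) := Real.rpow_nonneg (hQ0.le.trans hq) _
  refine arccos_bounds ?_
  have hp2 := hp.two_le
  -- `δ ≤ Q ^ (-2 (p - 1))`, so `δ² ≤ (Q⁴) ^ (-(p - 1)) ≤ (4 Q)⁻¹ (Q⁴) ^ (-(p - 2))`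
  have hδ1 : q ^ (-(2 * ((p : ℝ) - 1))) ≤ (((Q : ℝ) ^ 2) ^ (p - 1))⁻¹ := by
    have hp1 : (1 : ℝ) ≤ p := by exact_mod_cast hp.one_le
    refine (Real.rpow_le_rpow_of_nonpos hQ0 hq (by linarith)).trans (le_of_eq ?_)
    rw [Real.rpow_neg hQ0.le, ← pow_mul, ← Real.rpow_natCast]
    congr 2
    rw [Nat.cast_mul, Nat.cast_sub hp.one_le]
    norm_num
  have hδ2 : (q ^ (-(2 * ((p : ℝ) - 1)))) ^ 2 * ((Q : ℝ) ^ 4 * ((Q : ℝ) ^ 4) ^ (p - 2)) ≤ 1 := by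
    have h1 : (Q : ℝ) ^ 4 * ((Q : ℝ) ^ 4) ^ (p - 2) = (((Q : ℝ) ^ 2) ^ (p - 1)) ^ 2 := by
      rw [← pow_succ', show p - 2 + 1 = p - 1 by omega]; ring
    rw [h1, ← mul_pow]
    refine pow_le_one₀ (by positivity) ?_
    calc _ ≤ (((Q : ℝ) ^ 2) ^ (p - 1))⁻¹ * ((Q : ℝ) ^ 2) ^ (p - 1) := by gcongr
      _ = 1 := inv_mul_cancel₀ (by positivity)
  set δ := q ^ (-(2 * ((p : ℝ) - 1)))
  set A := ((Q : ℝ) ^ 4) ^ (p - 2)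
  have hA : 0 < A := by positivity
  have hsq : ((-klSum ψ a).re / (2 * √Q)) ^ 2 = s ^ 2 / (4 * Q) := by
    rw [Complex.neg_re, div_pow, mul_pow, Real.sq_sqrt hQ0.le, neg_sq]; norm_num; rfl
  rw [hsq]
  have hQ4 : 4 * (Q : ℝ) ≤ (Q : ℝ) ^ 4 := by nlinarith [pow_le_pow_left₀ zero_le_two hQ 3]
  have h4 : δ ^ 2 * (4 * Q) ≤ 4 * Q - s ^ 2 := by
    refine le_of_mul_le_mul_right ?_ hA
    calc δ ^ 2 * (4 * Q) * A = δ ^ 2 * (4 * Q * A) := by ring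
      _ ≤ δ ^ 2 * ((Q : ℝ) ^ 4 * A) := by gcongr
      _ ≤ (4 * Q - s ^ 2) * A := hδ2.trans hgap'
  rw [div_add' _ _ _ (by positivity), div_le_one (by positivity)]
  linarith

theorem Kl_eq_neg_klSum {F : Type} [Field F] [Fintype F] (ψ : AddChar F ℂ) (a : F) :
    Kl F ψ a = -klSum ψ a := by
  classical
  rw [Kl, finsum_eq_sum_of_fintype, klSum]
  congr 1
  refine sum_bij' (fun x _ => (x : F)) (fun x hx => Units.mk0 x (by simpa using hx)) ?_ ?_ ?_ ?_ ?_
  all_goals simp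

end KloostermanSums

/-- **Bounds on the angles `θ_γ(B)` for `B ∈ P_q(a)`.** With `c_p := 2(p − 1)`, one has
`(q^a)^(−c_p) ≤ θ_γ(B) ≤ π − (q^a)^(−c_p)` for every `B ∈ P_q(a)`. -/
theorem theta_gamma_bounds
    (p : ℕ) (hp : p.Prime) (hodd : p ≠ 2)
    (Fq : Type) [Field Fq] [Fintype Fq] [CharP Fq p]
    (ψq : AddChar Fq ℂ) (hψ : ψq ≠ 1) (γ : Fqˣ)
    (a : ℕ) (ha : 1 ≤ a) (B : Polynomial Fq) (hB : B ∈ Pset Fq a) :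
    ((Fintype.card Fq : ℝ) ^ a) ^ (-(2 * ((p : ℝ) - 1))) ≤ thetaGamma Fq ψq γ B ∧
    thetaGamma Fq ψq γ B
      ≤ Real.pi - ((Fintype.card Fq : ℝ) ^ a) ^ (-(2 * ((p : ℝ) - 1))) := by
  obtain ⟨hmon, hirr, hX, hdvd⟩ := hB
  have := Fact.mk hirr
  have : Module.Finite Fq (AdjoinRoot B) := hmon.finite_adjoinRoot
  have : Finite (AdjoinRoot B) := Module.finite_of_finite Fq
  let _ : Fintype (AdjoinRoot B) := Fintype.ofFinite _
  have := charP_of_injective_algebraMap (algebraMap Fq (AdjoinRoot B)).injective p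
  let ψ : AddChar (AdjoinRoot B) ℂ :=
    ψq.compAddMonoidHom (Algebra.trace Fq (AdjoinRoot B)).toAddMonoidHom
  have hψ1 : ψ ≠ 1 := by
    obtain ⟨y, hy⟩ := AddChar.ne_one_iff.mp hψ
    obtain ⟨x, hx⟩ := Algebra.trace_surjective Fq (AdjoinRoot B) y
    exact AddChar.ne_one_iff.mpr ⟨x, by rw [← hx] at hy; exact hy⟩
  have hroot : AdjoinRoot.root B ≠ 0 := by
    intro h
    rw [← AdjoinRoot.mk_X, AdjoinRoot.mk_eq_zero] at h
    exact hX (Polynomial.eq_of_monic_of_associated hmon Polynomial.monic_X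
      (hirr.associated_of_dvd Polynomial.irreducible_X h))
  have hα : algebraMap Fq (AdjoinRoot B) (γ : Fq) * AdjoinRoot.root B ^ 2 ≠ 0 :=
    mul_ne_zero (by simp) (pow_ne_zero _ hroot)
  have hcard : (Fintype.card (AdjoinRoot B) : ℝ) ≤ (Fintype.card Fq : ℝ) ^ a := by
    rw [Module.card_eq_pow_finrank (K := Fq), (AdjoinRoot.powerBasis' hmon).finrank,
      AdjoinRoot.powerBasis'_dim]
    exact_mod_cast Nat.pow_le_pow_right Fintype.card_pos (Nat.le_of_dvd ha hdvd)
  have hmain := klSum_angle_bounds hp hodd ψ hψ1 _ hα hcard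
  -- `thetaGamma` is the angle of `Kl` for the composite function underlying `ψ`
  rw [← Kl_eq_neg_klSum] at hmain
  exact hmain
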